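/- Let d ≥ 1 and n_1, …, n_d ≥ 1 with N̂ = n_1 + ⋯ + n_d. There exists a deterministic vertex-query algorithm that finds the global sink of every d-dimensional grid USO on Fin n_1 × ⋯ × Fin n_d using at most N̂^{⌈d/2⌉} vertex queries. -/

import Mathlib

/-!
The algorithm treats the coordinates two at a time. For a set `S` of coordinates with
`(∑ i ∈ S, n i) ^ ((|S| + 1) / 2)` queries at hand, the sink of any face spanned by `S` can be
found (`win_face`); for `|S| ≤ 1` all vertices of the face are queried. For `S ∪ {a, b}`, view
each face spanned by `S` as a single cell of the grid on the coordinates `a` and `b`. The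
outgoing edges at the sinks of these faces define a USO on that two-dimensional grid
(`inherited_uso`), and evaluating a cell costs one recursive call. It remains to find the sink
of a two-dimensional USO with `n a + n b` evaluations (`win_pair`).

For that, keep a set `M` of evaluated cells in pairwise different rows and columns. Call `(r, c)`
live if each cell of `M` has an outgoing edge towards row `r` or column `c`. The sink is live
unless it lies in `M`, since a rectangle has only one sink (`Known.kill`). The heart of the
matter is that liveness of `(row i, col j)`, as a relation between `i` and `j` in `M`, is transitive
(`IsUSO2.live_trans`), which rests on a case analysis of subgrids with at most three rows and
columns. As it is also irreflexive, it has a minimal and a maximal element. So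
when `M` meets all rows that are left, some column of a cell of `M` cannot contain the sink, and
symmetrically with rows and columns exchanged (`IsUSO2.exists_dead`); that line is
discarded, together with its cell of `M`. When `M` misses both a row and a column, a cell in a
missed row and column is evaluated and added to `M`. A discarded line thus costs at most one
evaluation, which gives the bound `n a + n b`.

Adaptive querying is modelled by the inductive predicate `Win`, whose strategies compose
(`Win.bind`) and are turned into an algorithm at the end (`Win.toAlg`).
-/

/-- Two vertices of the `d`-dimensional grid `Fin n₁ × ⋯ × Fin n_d` are adjacent iff
they differ in exactly one coordinate. -/
def GridAdjD {d : ℕ} {n : Fin d → ℕ} (u v : ∀ i, Fin (n i)) : Prop :=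
  ∃ j : Fin d, u j ≠ v j ∧ ∀ i : Fin d, i ≠ j → u i = v i

/-- An orientation of the `d`-dimensional grid: every edge gets exactly one direction. -/
structure GridOrientationD (d : ℕ) (n : Fin d → ℕ) where
  dir : (∀ i, Fin (n i)) → (∀ i, Fin (n i)) → Bool
  dir_adj : ∀ u v, dir u v = true → GridAdjD u v
  dir_total : ∀ u v, GridAdjD u v → (dir u v = true ↔ dir v u = false)

/-- `v` is a sink of the subgrid `J₁ × ⋯ × J_d`: it lies in the subgrid and has no
outgoing edge to any vertex of the subgrid. -/
def IsSinkInD {d : ℕ} {n : Fin d → ℕ} (o : GridOrientationD d n)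
    (J : ∀ i, Set (Fin (n i))) (v : ∀ i, Fin (n i)) : Prop :=
  (∀ i, v i ∈ J i) ∧ ∀ u : ∀ i, Fin (n i), (∀ i, u i ∈ J i) → o.dir v u = false

/-- A unique sink orientation: every nonempty subgrid has exactly one sink. -/
def IsUSOD {d : ℕ} {n : Fin d → ℕ} (o : GridOrientationD d n) : Prop :=
  ∀ J : ∀ i, Set (Fin (n i)), (∀ i, (J i).Nonempty) →
    ∃! v : ∀ i, Fin (n i), IsSinkInD o J v

/-- The global sink of the `d`-dimensional grid. -/
def IsGlobalSinkD {d : ℕ} {n : Fin d → ℕ} (o : GridOrientationD d n)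
    (v : ∀ i, Fin (n i)) : Prop :=
  IsSinkInD o (fun _ => Set.univ) v

/-- A deterministic vertex-query algorithm on the `d`-dimensional grid: given the
history of queries (each recording the queried vertex together with, for every
vertex `u`, whether the edge at the queried vertex is directed towards `u`),
it outputs the next vertex to query. -/
def VertexAlgD (d : ℕ) (n : Fin d → ℕ) : Type :=
  List ((∀ i, Fin (n i)) × ((∀ i, Fin (n i)) → Bool)) → ∀ i, Fin (n i)

/-- The history of the first `t` vertex queries of algorithm `A` on orientation `o`. -/
def vertexHistD {d : ℕ} {n : Fin d → ℕ} (o : GridOrientationD d n) (A : VertexAlgD d n) :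
    ℕ → List ((∀ i, Fin (n i)) × ((∀ i, Fin (n i)) → Bool))
  | 0 => []
  | t + 1 =>
    vertexHistD o A t ++
      [(A (vertexHistD o A t), fun u => o.dir (A (vertexHistD o A t)) u)]

/-- The `t`-th vertex queried by algorithm `A` on orientation `o` (0-indexed). -/
def vertexQueriedD {d : ℕ} {n : Fin d → ℕ} (o : GridOrientationD d n)
    (A : VertexAlgD d n) (t : ℕ) : ∀ i, Fin (n i) :=
  A (vertexHistD o A t)

/-! ### Two-dimensional grid unique sink orientations -/

/-- A unique sink orientation of the two-dimensional grid `R × C`, given by its outgoing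
edges: `H p q q'` is the edge from `(p, q)` to `(p, q')` within row `p`, and `V q p p'` the edge
from `(p, q)` to `(p', q)` within column `q`. That every edge carries exactly one direction is
not part of the definition; it follows from uniqueness of sinks on single rows and columns. -/
def IsUSO2 {R C : Type*} (H : R → C → C → Prop) (V : C → R → R → Prop) : Prop :=
  ∀ (I : Set R) (J : Set C), I.Nonempty → J.Nonempty →
    ∃! p : R × C, p.1 ∈ I ∧ p.2 ∈ J ∧ (∀ q ∈ J, ¬ H p.1 p.2 q) ∧ ∀ r ∈ I, ¬ V p.2 p.1 r

namespace IsUSO2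

variable {R C : Type*} {H : R → C → C → Prop} {V : C → R → R → Prop}

theorem swap (h : IsUSO2 H V) : IsUSO2 V H := by
  intro I J hI hJ
  obtain ⟨p, ⟨h1, h2, h3, h4⟩, hu⟩ := h J I hJ hI
  refine ⟨(p.2, p.1), ⟨h2, h1, h4, h3⟩, ?_⟩
  rintro ⟨a, b⟩ ⟨k1, k2, k3, k4⟩
  have := hu (b, a) ⟨k2, k1, k4, k3⟩
  rw [← this]

theorem irreflH (h : IsUSO2 H V) (p : R) (q : C) : ¬ H p q q := by
  obtain ⟨⟨a, b⟩, ⟨h1, h2, h3, -⟩, -⟩ :=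
    h {p} {q} (Set.singleton_nonempty _) (Set.singleton_nonempty _)
  obtain rfl : a = p := h1
  obtain rfl : b = q := h2
  exact h3 _ rfl

theorem irreflV (h : IsUSO2 H V) (q : C) (p : R) : ¬ V q p p := h.swap.irreflH q p

/-- Two antipodal vertices of a rectangle (possibly degenerate) are not both sinks of it. -/
theorem noTwo (h : IsUSO2 H V) {p p' : R} {q q' : C}
    (h1 : ¬ H p q q') (h2 : ¬ V q p p') (h3 : ¬ H p' q' q) (h4 : ¬ V q' p' p) :
    p = p' ∧ q = q' := by
  have := (h {p, p'} {q, q'} (Set.insert_nonempty _ _) (Set.insert_nonempty _ _)).unique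
    (y₁ := (p, q)) (y₂ := (p', q'))
    (by simp [h1, h2, h.irreflH, h.irreflV]) (by simp [h3, h4, h.irreflH, h.irreflV])
  simpa using this

theorem noCycle (h : IsUSO2 H V) {p p' : R} {q q' : C}
    (h1 : H p q q') (h2 : V q' p p') (h3 : H p' q' q) (h4 : V q p' p) : False := by
  obtain ⟨⟨a, b⟩, ⟨k1, k2, k3, k4⟩, -⟩ :=
    h {p, p'} {q, q'} (Set.insert_nonempty _ _) (Set.insert_nonempty _ _)
  simp only [Set.mem_insert_iff, Set.mem_singleton_iff, forall_eq_or_imp, forall_eq] at k1 k2 k3 k4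
  grind

theorem totalH (h : IsUSO2 H V) {p : R} {q q' : C} (hq : q ≠ q') : H p q q' ∨ H p q' q := by
  by_contra hc
  push Not at hc
  exact hq (h.noTwo hc.1 (h.irreflV _ _) hc.2 (h.irreflV _ _)).2

theorem totalV (h : IsUSO2 H V) {q : C} {p p' : R} (hp : p ≠ p') : V q p p' ∨ V q p' p :=
  h.swap.totalH hp

theorem asymmH (h : IsUSO2 H V) {p : R} {q q' : C} (h1 : H p q q') : ¬ H p q' q := by
  intro h2
  obtain ⟨⟨a, b⟩, ⟨k1, k2, k3, -⟩, -⟩ :=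
    h {p} {q, q'} (Set.singleton_nonempty _) (Set.insert_nonempty _ _)
  simp only [Set.mem_insert_iff, Set.mem_singleton_iff, forall_eq_or_imp, forall_eq] at k1 k2 k3
  grind

theorem asymmV (h : IsUSO2 H V) {q : C} {p p' : R} (h1 : V q p p') : ¬ V q p' p :=
  h.swap.asymmH h1

theorem transH (h : IsUSO2 H V) {p : R} {a b c : C} (h1 : H p a b) (h2 : H p b c) : H p a c := by
  have hac : a ≠ c := by
    rintro rfl
    exact h.asymmH h1 h2
  refine (h.totalH hac).resolve_right fun h3 => ?_
  obtain ⟨⟨x, y⟩, ⟨k1, k2, k3, -⟩, -⟩ :=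
    h {p} {a, b, c} (Set.singleton_nonempty _) (Set.insert_nonempty _ _)
  simp only [Set.mem_insert_iff, Set.mem_singleton_iff, forall_eq_or_imp, forall_eq] at k1 k2 k3
  grind

theorem transV (h : IsUSO2 H V) {q : C} {a b c : R} (h1 : V q a b) (h2 : V q b c) : V q a c :=
  h.swap.transH h1 h2

/-- The generic configuration excluded in `live_trans`, where `(ri, ci)` is the cell that would
refute transitivity: the listed edges force the remaining edges of a `3 × 3` subgrid one after
the other, until some rectangle has two antipodal sinks. -/
theorem core (h : IsUSO2 H V) {r1 r2 ri : R} {c2 c3 ci : C}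
    (hr12 : r1 ≠ r2) (hr1i : r1 ≠ ri) (hr2i : r2 ≠ ri)
    (hc23 : c2 ≠ c3) (hc2i : c2 ≠ ci) (hc3i : c3 ≠ ci)
    (e1 : V c2 r2 r1) (e2 : H r2 c2 c3) (e3 : H ri ci c2) (e4 : V ci ri r2)
    (e5 : H ri c3 ci) (e6 : V ci r1 ri) (e7 : V c2 ri r2) : False := by
  have f1 : H ri c3 c2 := h.transH e5 e3
  have f2 : V c2 ri r1 := h.transV e7 e1
  have f3 : V ci r1 r2 := h.transV e6 e4
  have g1 : V c3 ri r2 := (h.totalV hr2i.symm).resolve_right fun x => h.noCycle f1 e7 e2 x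
  have g2 : H r1 ci c2 := (h.totalH hc2i.symm).resolve_right fun x =>
    h.noCycle x e6 e3 f2
  have key : V c3 r1 r2 → H r1 c2 c3 := fun x => (h.totalH hc23).resolve_right fun y =>
    hr12 (h.noTwo (h.asymmH y) (h.asymmV e1) (h.asymmH e2) (h.asymmV x)).1
  have g3 : V c3 ri r1 := by
    refine (h.totalV hr1i.symm).resolve_right fun x => ?_
    exact h.noCycle (key (h.transV x g1)) x f1 f2
  have g4 : H r1 c3 ci := by
    refine (h.totalH hc3i).resolve_right fun x => ?_
    exact hr1i (h.noTwo (h.asymmH x) (h.asymmV g3) (h.asymmH e5) (h.asymmV e6)).1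
  have g5 : V c3 r2 r1 := by
    refine (h.totalV hr12.symm).resolve_right fun x => ?_
    exact h.asymmH (h.transH (key x) g4) g2
  have g6 : H r2 c3 ci := (h.totalH hc3i).resolve_right fun x => h.noCycle g4 f3 x g5
  exact hr12 (h.noTwo (h.asymmH g2) (h.asymmV e1) (h.asymmH (h.transH e2 g6)) (h.asymmV f3)).1

/-- The degenerate configuration excluded in `live_trans`, where the refuting cell coincides with
one of the end points. -/
theorem core1 (h : IsUSO2 H V) {r1 r2 : R} {c1 c2 c3 : C} (hr12 : r1 ≠ r2) (hc12 : c1 ≠ c2)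
    (e1 : H r1 c1 c2) (e2 : V c1 r1 r2) (e3 : V c2 r2 r1) (e4 : H r2 c2 c3) :
    ¬ H r1 c3 c1 := by
  intro e5
  have g1 : H r2 c1 c2 := (h.totalH hc12).resolve_right fun x =>
    hr12 (h.noTwo (h.asymmH e1) (h.asymmV e3) (h.asymmH x) (h.asymmV e2)).1
  have g2 : V c3 r1 r2 := (h.totalV hr12).resolve_right fun x =>
    h.noCycle e5 e2 (h.transH g1 e4) x
  exact hr12 (h.noTwo (h.asymmH (h.transH e5 e1)) (h.asymmV e3) (h.asymmH e4) (h.asymmV g2)).1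

/-- The position `(r, c)` is live with respect to the cells `(row m, col m)` if each of these
cells has an outgoing edge towards row `r` or towards column `c`. If `(r, c)` is not live,
then some `(row m, col m)` is the sink of the rectangle it spans with `(r, c)`, so `(r, c)`
is not the global sink unless it is that cell itself. -/
def Live {R C M : Type*} (H : R → C → C → Prop) (V : C → R → R → Prop)
    (row : M → R) (col : M → C) (r : R) (c : C) : Prop :=
  ∀ m, V (col m) (row m) r ∨ H (row m) (col m) c

/-- On the row and column indices of a family of cells in pairwise different rows and columns,
liveness is transitive. Being irreflexive as well, it is acyclic. -/
theorem live_trans (h : IsUSO2 H V) {M : Type*} {row : M → R} {col : M → C}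
    (hrow : row.Injective) (hcol : col.Injective) {i j k : M}
    (hij : Live H V row col (row i) (col j)) (hjk : Live H V row col (row j) (col k)) :
    Live H V row col (row i) (col k) := by
  have ne : ∀ {a b}, Live H V row col (row a) (col b) → a ≠ b := by
    rintro a b hl rfl
    exact (hl a).elim (h.irreflV _ _) (h.irreflH _ _)
  have nij := ne hij
  have njk := ne hjk
  have e1 : V (col j) (row j) (row i) := (hij j).resolve_right (h.irreflH _ _)
  have e1' : H (row i) (col i) (col j) := (hij i).resolve_left (h.irreflV _ _)
  have e2 : H (row j) (col j) (col k) := (hjk j).resolve_left (h.irreflV _ _)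
  have e2' : V (col k) (row k) (row j) := (hjk k).resolve_right (h.irreflH _ _)
  intro m
  by_contra hc
  push Not at hc
  obtain ⟨hc1, hc2⟩ := hc
  have nmj : m ≠ j := by rintro rfl; exact hc1 e1
  have e3 : H (row m) (col m) (col j) := (hij m).resolve_left hc1
  have e4 : V (col m) (row m) (row j) := (hjk m).resolve_right hc2
  by_cases hik : i = k
  · subst hik
    exact nij (hrow (h.noTwo (h.asymmH e1') (h.asymmV e1) (h.asymmH e2) (h.asymmV e2')).1)
  by_cases hmi : m = i
  · subst hmi
    exact h.core1 (hrow.ne nij) (hcol.ne nij) e3 e4 e1 e2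
      ((h.totalH (hcol.ne (Ne.symm hik))).resolve_right hc2)
  by_cases hmk : m = k
  · subst hmk
    exact h.swap.core1 (hcol.ne njk.symm) (hrow.ne njk.symm) e4 e3 e2 e1
      ((h.totalV (hrow.ne hik)).resolve_right hc1)
  have e5 : H (row m) (col k) (col m) :=
    (h.totalH (hcol.ne (Ne.symm hmk))).resolve_right hc2
  have e6 : V (col m) (row i) (row m) :=
    (h.totalV (hrow.ne (Ne.symm hmi))).resolve_right hc1
  by_cases hx : V (col j) (row m) (row j)
  · exact h.core (hrow.ne nij) (hrow.ne (Ne.symm hmi)) (hrow.ne nmj.symm) (hcol.ne njk)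
      (hcol.ne nmj.symm) (hcol.ne (Ne.symm hmk)) e1 e2 e3 e4 e5 e6 hx
  · have hy : H (row j) (col m) (col j) := (h.totalH (hcol.ne nmj)).resolve_right fun y =>
      nmj (hrow (h.noTwo (h.asymmH y) (h.asymmV e4) (h.asymmH e3) hx).1.symm)
    exact h.swap.core (hcol.ne njk.symm) (hcol.ne (Ne.symm hmk)) (hcol.ne nmj.symm)
      (hrow.ne nij.symm) (hrow.ne nmj.symm) (hrow.ne (Ne.symm hmi)) e2 e1 e4 e3 e6 e5 hy

/-- For a nonempty finite set `M` of cells in pairwise different rows and columns, some column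
of a cell of `M` is not live with any row met by `M`, and some row of a cell of `M` is not
live with any column met by `M`: take a minimal and a maximal element of the liveness
relation. -/
theorem exists_dead (h : IsUSO2 H V) {M : Finset (R × C)} (hM : M.Nonempty)
    (hrow : Set.InjOn Prod.fst (M : Set (R × C))) (hcol : Set.InjOn Prod.snd (M : Set (R × C))) :
    (∃ j ∈ M, ∀ i ∈ M, ∃ m ∈ M, ¬ V m.2 m.1 i.1 ∧ ¬ H m.1 m.2 j.2) ∧
      ∃ i ∈ M, ∀ j ∈ M, ∃ m ∈ M, ¬ V m.2 m.1 i.1 ∧ ¬ H m.1 m.2 j.2 := by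
  let row : M → R := fun m => m.1.1
  let col : M → C := fun m => m.1.2
  let L : M → M → Prop := fun i j => Live H V row col (row i) (col j)
  have hr : row.Injective := fun m m' hm => Subtype.ext (hrow m.2 m'.2 hm)
  have hc : col.Injective := fun m m' hm => Subtype.ext (hcol m.2 m'.2 hm)
  have htr : IsTrans M L := ⟨fun _ _ _ => h.live_trans hr hc⟩
  have hirr : Std.Irrefl L := ⟨fun i hl => (hl i).elim (h.irreflV _ _) (h.irreflH _ _)⟩
  have dead : ∀ i j, ¬ L i j → ∃ m ∈ M, ¬ V m.2 m.1 (row i) ∧ ¬ H m.1 m.2 (col j) := by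
    intro i j hl
    simp only [L, Live, not_forall, not_or] at hl
    obtain ⟨m, hm⟩ := hl
    exact ⟨m.1, m.2, hm⟩
  have hne : (Set.univ : Set M).Nonempty := ⟨⟨hM.choose, hM.choose_spec⟩, trivial⟩
  obtain ⟨j, -, hj⟩ := (Finite.wellFounded_of_trans_of_irrefl L).has_min Set.univ hne
  obtain ⟨i, -, hi⟩ := (Finite.wellFounded_of_trans_of_irrefl (Function.swap L)).has_min
    Set.univ hne
  exact ⟨⟨j.1, j.2, fun i hi' => dead ⟨i, hi'⟩ j (hj ⟨i, hi'⟩ trivial)⟩,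
    ⟨i.1, i.2, fun j hj' => dead i ⟨j, hj'⟩ (hi ⟨j, hj'⟩ trivial)⟩⟩

end IsUSO2

/-! ### The query game -/

section Game

variable {d : ℕ} {n : Fin d → ℕ}

/-- A finite sequence of queried vertices with the answers. -/
abbrev Hist (n : Fin d → ℕ) : Type :=
  List ((∀ i, Fin (n i)) × ((∀ i, Fin (n i)) → Bool))

/-- `Win P k h`: starting from the history `h`, at most `k` further adaptively chosen vertex
queries suffice to reach a history satisfying `P`, whatever the answers are. Answers are
arbitrary; consistency with an orientation enters only through `P`. -/
inductive Win (P : Hist n → Prop) : ℕ → Hist n → Prop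
  | done {k : ℕ} {h : Hist n} : P h → Win P k h
  | query {k : ℕ} {h : Hist n} (v : ∀ i, Fin (n i)) :
      (∀ f, Win P k (h ++ [(v, f)])) → Win P (k + 1) h

theorem Win.mono {P : Hist n → Prop} {k l : ℕ} {h : Hist n} (hw : Win P k h) (hkl : k ≤ l) :
    Win P l h := by
  induction hw generalizing l with
  | done hp => exact .done hp
  | query v _ ih =>
    obtain ⟨l, rfl⟩ : ∃ l', l = l' + 1 := ⟨l - 1, by omega⟩
    exact .query v fun f => ih f (by omega)

theorem Win.bind {P Q : Hist n → Prop} {k l : ℕ} {h : Hist n} (hw : Win P k h)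
    (hn : ∀ h', h ⊆ h' → P h' → Win Q l h') : Win Q (k + l) h := by
  induction hw with
  | done hp => exact (hn _ (List.Subset.refl _) hp).mono (by omega)
  | @query k h v _ ih =>
    have : Win Q (k + l + 1) h := .query v fun f => ih f fun h' hs hp =>
      hn h' (fun e he => hs (List.mem_append_left _ he)) hp
    exact this.mono (by omega)

/-- A winning strategy gives an algorithm. The history `h` is reached after `t₀` steps, and only
the behaviour of the algorithm on extensions of `h` matters, hence the quantification over all
`A'` that agree with `A` there. -/
theorem Win.toAlg {P : Hist n → Prop} {k : ℕ} {h : Hist n} (x₀ : ∀ i, Fin (n i))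
    (hw : Win P k h) : ∃ A : VertexAlgD d n, ∀ A' : VertexAlgD d n,
      (∀ h', h <+: h' → A' h' = A h') → ∀ (o : GridOrientationD d n) (t₀ : ℕ),
        vertexHistD o A' t₀ = h → ∃ t ≤ k, P (vertexHistD o A' (t₀ + t)) := by
  induction hw with
  | done hp => exact ⟨fun _ => x₀, fun A' _ o t₀ ht => ⟨0, by omega, by simpa [ht] using hp⟩⟩
  | @query k h v _ ih =>
    choose F hF using ih
    -- The entry of `h'` at index `h.length` is the answer to the query `v`; it selects the
    -- strategy to continue with.
    refine ⟨fun h' => match h'[h.length]? with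
      | none => v
      | some e => F e.2 h', fun A' hA o t₀ ht => ?_⟩
    have hv : A' h = v := by rw [hA h (List.prefix_refl h)]; simp
    have hstep : vertexHistD o A' (t₀ + 1) = h ++ [(v, fun u => o.dir v u)] := by
      rw [vertexHistD, ht, hv]
    obtain ⟨t, htk, hP⟩ := hF (fun u => o.dir v u) A' (fun h' hp => by
      rw [hA h' ((List.prefix_append _ _).trans hp)]
      obtain ⟨l, rfl⟩ := hp
      simp) o (t₀ + 1) hstep
    exact ⟨t + 1, by omega, by rwa [← add_assoc, add_right_comm]⟩

theorem Win.queryAll {P : Hist n → Prop} (L : List (∀ i, Fin (n i))) (h : Hist n)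
    (hP : ∀ h', h ⊆ h' → (∀ v ∈ L, ∃ f, (v, f) ∈ h') → P h') : Win P L.length h := by
  induction L generalizing h with
  | nil => exact .done (hP h (List.Subset.refl _) (by simp))
  | cons v L ih =>
    refine .query v fun f => ih _ fun h' hs hL => hP h' (fun e he => hs (List.mem_append_left _ he)) ?_
    intro u hu
    rcases List.mem_cons.1 hu with rfl | hu
    · exact ⟨f, hs (by simp)⟩
    · exact hL u hu

/-- `o` is a grid USO that would give all the answers recorded in `h`. -/
def Cons (o : GridOrientationD d n) (h : Hist n) : Prop :=
  IsUSOD o ∧ ∀ e ∈ h, e.2 = o.dir e.1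

theorem Cons.mono {o : GridOrientationD d n} {h h' : Hist n} (hc : Cons o h') (hs : h ⊆ h') :
    Cons o h := ⟨hc.1, fun e he => hc.2 e (hs he)⟩

theorem cons_hist {o : GridOrientationD d n} (ho : IsUSOD o) (A : VertexAlgD d n) (t : ℕ) :
    Cons o (vertexHistD o A t) := by
  refine ⟨ho, ?_⟩
  induction t with
  | zero => simp [vertexHistD]
  | succ t ih =>
    intro e he
    rw [vertexHistD, List.mem_append, List.mem_singleton] at he
    rcases he with he | rfl
    · exact ih e he
    · rfl

theorem mem_hist {o : GridOrientationD d n} {A : VertexAlgD d n} {t : ℕ}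
    {e : (∀ i, Fin (n i)) × ((∀ i, Fin (n i)) → Bool)} (he : e ∈ vertexHistD o A t) :
    ∃ t' < t, vertexQueriedD o A t' = e.1 := by
  induction t with
  | zero => simp [vertexHistD] at he
  | succ t ih =>
    rw [vertexHistD, List.mem_append, List.mem_singleton] at he
    rcases he with he | he
    · obtain ⟨t', h1, h2⟩ := ih he
      exact ⟨t', by omega, h2⟩
    · exact ⟨t, Nat.lt_succ_self t, by rw [he]; rfl⟩

/-! ### Faces and their sinks -/

/-- `w` is the sink of the face of `x` spanned by the coordinates in `S`, which consists of the
vertices agreeing with `x` outside `S`. -/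
def IsFaceSink (o : GridOrientationD d n) (S : Finset (Fin d)) (x w : ∀ i, Fin (n i)) : Prop :=
  (∀ i ∉ S, w i = x i) ∧ ∀ i ∈ S, ∀ y, o.dir w (Function.update w i y) = false

theorem dir_self (o : GridOrientationD d n) (v : ∀ i, Fin (n i)) : o.dir v v = false := by
  by_contra hc
  obtain ⟨j, hj, -⟩ := o.dir_adj v v (by simpa using hc)
  exact hj rfl

/-- For a sink it is enough to look at the neighbours in the subgrid, one coordinate at a
time. -/
theorem isSinkInD_iff {o : GridOrientationD d n} {J : ∀ i, Set (Fin (n i))}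
    {v : ∀ i, Fin (n i)} : IsSinkInD o J v ↔
      (∀ i, v i ∈ J i) ∧ ∀ i, ∀ y ∈ J i, o.dir v (Function.update v i y) = false := by
  refine and_congr_right fun hv => ⟨fun h i y hy => h _ fun k => ?_, fun h u hu => ?_⟩
  · by_cases hk : k = i
    · subst hk; simpa using hy
    · simpa [hk] using hv k
  · by_contra hc
    obtain ⟨j, -, hj⟩ := o.dir_adj v u (by simpa using hc)
    have : u = Function.update v j (u j) := by
      ext k
      by_cases hk : k = j
      · subst hk; simp
      · simp [hk, hj k hk]
    rw [this] at hc
    exact hc (h j _ (hu j))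

theorem face_unique {o : GridOrientationD d n} (ho : IsUSOD o) (S : Finset (Fin d))
    (x : ∀ i, Fin (n i)) : ∃! w, IsFaceSink o S x w := by
  classical
  have key : ∀ w, IsSinkInD o (fun i => if i ∈ S then Set.univ else {x i}) w ↔
      IsFaceSink o S x w := by
    intro w
    rw [isSinkInD_iff]
    constructor
    · rintro ⟨h1, h2⟩
      exact ⟨fun i hi => by simpa [hi] using h1 i, fun i hi y => h2 i y (by simp [hi])⟩
    · rintro ⟨h1, h2⟩
      refine ⟨fun i => ?_, fun i y hy => ?_⟩
      · by_cases hi : i ∈ S <;> simp [hi, h1]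
      · by_cases hi : i ∈ S
        · exact h2 i hi y
        · have : y = w i := by simpa [hi, h1 i hi] using hy
          simp [this, dir_self]
  have := ho (fun i => if i ∈ S then Set.univ else {x i}) fun i => by
    by_cases hi : i ∈ S
    · simpa [hi] using ⟨x i, trivial⟩
    · simp [hi]
  simpa [key] using this

theorem isFaceSink_congr {o o' : GridOrientationD d n} {S : Finset (Fin d)}
    {x w : ∀ i, Fin (n i)} (hd : o.dir w = o'.dir w) (h : IsFaceSink o S x w) :
    IsFaceSink o' S x w := ⟨h.1, fun i hi y => hd ▸ h.2 i hi y⟩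

/-- The face of `x` spanned by `S` is known after the history `h` if, for every orientation
consistent with `h`, its sink is among the queried vertices. -/
def Known (S : Finset (Fin d)) (x : ∀ i, Fin (n i)) (h : Hist n) : Prop :=
  ∀ o, Cons o h → ∃ e ∈ h, IsFaceSink o S x e.1

theorem Known.mono {S : Finset (Fin d)} {x : ∀ i, Fin (n i)} {h h' : Hist n}
    (hk : Known S x h) (hs : h ⊆ h') : Known S x h' := fun o ho => by
  obtain ⟨e, he, h1⟩ := hk o (ho.mono hs)
  exact ⟨e, hs he, h1⟩

/-- All orientations consistent with `h` have the same outgoing edges at the sink of a known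
face, because that vertex has been queried. -/
theorem Known.agree {S : Finset (Fin d)} {x : ∀ i, Fin (n i)} {h : Hist n}
    (hk : Known S x h) {o : GridOrientationD d n} (ho : Cons o h) {w : ∀ i, Fin (n i)}
    (hw : IsFaceSink o S x w) {o' : GridOrientationD d n} (ho' : Cons o' h) :
    (∃ f, (w, f) ∈ h) ∧ o.dir w = o'.dir w := by
  obtain ⟨e, he, h1⟩ := hk o ho
  obtain rfl := (face_unique ho.1 S x).unique h1 hw
  exact ⟨⟨e.2, he⟩, (ho.2 e he).symm.trans (ho'.2 e he)⟩

/-- The vertex `x` with coordinates `a` and `b` replaced by `p` and `q`; it represents the cell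
`(p, q)` of the grid on the coordinates `a`, `b`. -/
def pt (x : ∀ i, Fin (n i)) (a b : Fin d) (p : Fin (n a)) (q : Fin (n b)) : ∀ i, Fin (n i) :=
  Function.update (Function.update x a p) b q

/-- The inherited orientation: the face of `y` spanned by `S` points, in direction `c`, towards
the parallel face with `c`-coordinate `z` iff its sink has that outgoing edge. -/
def Inh (o : GridOrientationD d n) (S : Finset (Fin d)) (y : ∀ i, Fin (n i)) (c : Fin d)
    (z : Fin (n c)) : Prop :=
  ∃ w, IsFaceSink o S y w ∧ o.dir w (Function.update w c z) = true

theorem not_inh_iff {o : GridOrientationD d n} (ho : IsUSOD o) {S : Finset (Fin d)}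
    {y w : ∀ i, Fin (n i)} {c : Fin d} {z : Fin (n c)} (hw : IsFaceSink o S y w) :
    ¬ Inh o S y c z ↔ o.dir w (Function.update w c z) = false := by
  constructor
  · intro h
    by_contra hc
    exact h ⟨w, hw, by simpa using hc⟩
  · rintro h ⟨w', h1, h2⟩
    obtain rfl := (face_unique ho S y).unique h1 hw
    simp [h] at h2

/-- Contracting each face spanned by `S` to its sink gives a USO on the grid of the coordinates
`a` and `b`: the sink of a subgrid `I × J` there corresponds to the sink of the subgrid with
all coordinates of `S` free. -/
theorem inherited_uso {o : GridOrientationD d n} (ho : IsUSOD o) {S : Finset (Fin d)}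
    {a b : Fin d} (hab : a ≠ b) (haS : a ∉ S) (hbS : b ∉ S) (x : ∀ i, Fin (n i)) :
    IsUSO2 (fun (p : Fin (n a)) (q : Fin (n b)) => Inh o S (pt x a b p q) b)
      (fun q p => Inh o S (pt x a b p q) a) := by
  classical
  intro I J hI hJ
  let K : ∀ i, Set (Fin (n i)) := Function.update (Function.update
    (fun i => if i ∈ S then Set.univ else {x i}) a I) b J
  have Ka : K a = I := by simp [K, hab]
  have Kb : K b = J := by simp [K]
  have KS : ∀ i ∈ S, K i = Set.univ := fun i hi => by
    have h1 : i ≠ a := by rintro rfl; exact haS hi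
    have h2 : i ≠ b := by rintro rfl; exact hbS hi
    simp [K, h1, h2, hi]
  have Kx : ∀ i, i ∉ S → i ≠ a → i ≠ b → K i = {x i} := fun i hi h1 h2 => by
    simp [K, h1, h2, hi]
  have key : ∀ v, IsSinkInD o K v ↔ ((v a ∈ I ∧ v b ∈ J) ∧
      IsFaceSink o S (pt x a b (v a) (v b)) v) ∧
      (∀ q ∈ J, o.dir v (Function.update v b q) = false) ∧
      ∀ p ∈ I, o.dir v (Function.update v a p) = false := by
    intro v
    rw [isSinkInD_iff]
    constructor
    · rintro ⟨h1, h2⟩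
      refine ⟨⟨⟨Ka ▸ h1 a, Kb ▸ h1 b⟩, fun i hi => ?_, fun i hi y => h2 i y (by simp [KS i hi])⟩,
        fun q hq => h2 b q (Kb ▸ hq), fun p hp => h2 a p (Ka ▸ hp)⟩
      by_cases hib : i = b
      · subst hib; simp [pt]
      by_cases hia : i = a
      · subst hia; simp [pt, hab]
      · have := h1 i
        rw [Kx i hi hia hib] at this
        simpa [pt, hib, hia] using this
    · rintro ⟨⟨⟨h1, h2⟩, h3, h4⟩, h5, h6⟩
      have hx : ∀ i, i ∉ S → i ≠ a → i ≠ b → v i = x i := fun i hi hia hib => by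
        simpa [pt, hib, hia] using h3 i hi
      refine ⟨fun i => ?_, fun i y hy => ?_⟩
      · by_cases hi : i ∈ S
        · simp [KS i hi]
        by_cases hib : i = b
        · subst hib; rwa [Kb]
        by_cases hia : i = a
        · subst hia; rwa [Ka]
        · simp [Kx i hi hia hib, hx i hi hia hib]
      · by_cases hi : i ∈ S
        · exact h4 i hi y
        by_cases hib : i = b
        · subst hib; exact h5 y (Kb ▸ hy)
        by_cases hia : i = a
        · subst hia; exact h6 y (Ka ▸ hy)
        · rw [Kx i hi hia hib, ← hx i hi hia hib] at hy
          obtain rfl : y = v i := hy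
          simp [dir_self]
  have hne : ∀ i, (K i).Nonempty := fun i => by
    by_cases hi : i ∈ S
    · rw [KS i hi]; exact ⟨x i, trivial⟩
    by_cases hib : i = b
    · subst hib; rwa [Kb]
    by_cases hia : i = a
    · subst hia; rwa [Ka]
    · simp [Kx i hi hia hib]
  obtain ⟨v, hv, hu⟩ := ho K hne
  obtain ⟨⟨⟨h1, h2⟩, h3⟩, h5, h6⟩ := (key v).1 hv
  refine ⟨(v a, v b), ⟨h1, h2, fun q hq => (not_inh_iff ho h3).2 (h5 q hq),
    fun p hp => (not_inh_iff ho h3).2 (h6 p hp)⟩, ?_⟩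
  rintro ⟨p, q⟩ ⟨k1, k2, k3, k4⟩
  obtain ⟨w, hw, -⟩ := face_unique ho S (pt x a b p q)
  have wa : w a = p := by rw [hw.1 a haS]; simp [pt, hab]
  have wb : w b = q := by rw [hw.1 b hbS]; simp [pt]
  dsimp only at k1 k2 k3 k4
  subst wa wb
  have := hu w ((key w).2 ⟨⟨⟨k1, k2⟩, hw⟩, fun q hq => (not_inh_iff ho hw).1 (k3 q hq),
    fun p hp => (not_inh_iff ho hw).1 (k4 p hp)⟩)
  rw [this]

theorem IsFaceSink.inner {o : GridOrientationD d n} {S : Finset (Fin d)}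
    {a b : Fin d} (hab : a ≠ b) {x v : ∀ i, Fin (n i)}
    (hv : IsFaceSink o (insert a (insert b S)) x v) :
    IsFaceSink o S (pt x a b (v a) (v b)) v := by
  refine ⟨fun i hi => ?_, fun i hi => hv.2 i (by simp [hi])⟩
  by_cases hib : i = b
  · subst hib; simp [pt]
  by_cases hia : i = a
  · subst hia; simp [pt, hab]
  · simpa [pt, hib, hia] using hv.1 i (by simp [hi, hia, hib])

/-! ### Two coordinates at a time -/

/-- If the known cell `(p, q)` has no outgoing edge towards the row or the column of the cell
containing the sink `v`, then `(p, q)` is itself that cell, so `v` has been queried. The edges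
at `(p, q)` are read off from any consistent `o`, while `v` is the sink for another one. -/
theorem Known.kill {S : Finset (Fin d)} {a b : Fin d} (hab : a ≠ b) (haS : a ∉ S) (hbS : b ∉ S)
    {x v : ∀ i, Fin (n i)} {h : Hist n} {p : Fin (n a)} {q : Fin (n b)}
    (hk : Known S (pt x a b p q) h) {o o' : GridOrientationD d n} (ho : Cons o h)
    (ho' : Cons o' h) (hv : IsFaceSink o' (insert a (insert b S)) x v)
    (h1 : ¬ Inh o S (pt x a b p q) a (v a)) (h2 : ¬ Inh o S (pt x a b p q) b (v b)) :
    Known (insert a (insert b S)) x h := by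
  obtain ⟨w, hw, -⟩ := face_unique ho.1 S (pt x a b p q)
  obtain ⟨⟨f, hf⟩, hd⟩ := hk.agree ho hw ho'
  have hw' := isFaceSink_congr hd hw
  rw [not_inh_iff ho.1 hw, hd, ← not_inh_iff ho'.1 hw'] at h1 h2
  have hvi := hv.inner hab
  obtain ⟨rfl, rfl⟩ := (inherited_uso ho'.1 hab haS hbS x).noTwo (p := p) (q := q)
    (p' := v a) (q' := v b) h2 h1 ((not_inh_iff ho'.1 hvi).2 (hv.2 b (by simp) q))
    ((not_inh_iff ho'.1 hvi).2 (hv.2 a (by simp) p))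
  obtain rfl := (face_unique ho'.1 S _).unique hw' hvi
  exact fun o'' ho'' =>
    ⟨_, hf, isFaceSink_congr (hd.symm.trans (hk.agree ho hw ho'').2) hv⟩

/-- If the faces spanned by `S` can be made known with `k` queries, then those spanned by
`S ∪ {a, b}` can with `(n a + n b) * k`. In the loop, `R` and `C` are the rows and columns of the
grid on `a`, `b` that can still contain the sink, and `M` is a set of known cells in pairwise
different rows and columns. If `M` misses a row and a column, a new cell is made known; otherwise
`exists_dead` removes a row or a column, at the cost of one cell of `M`. The budget of cells
`B` satisfies `|R| + |C| ≤ B + |M|` throughout, and `2 * (|R| + |C|) - |M|` decreases. -/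
theorem win_pair {S : Finset (Fin d)} {a b : Fin d} (hab : a ≠ b) (haS : a ∉ S) (hbS : b ∉ S)
    (x : ∀ i, Fin (n i)) {k : ℕ} (ih : ∀ y h, Win (n := n) (Known S y) k h) (μ : ℕ) :
    ∀ (B : ℕ) (R : Finset (Fin (n a))) (C : Finset (Fin (n b)))
      (M : Finset (Fin (n a) × Fin (n b))) (h : Hist n),
      2 * (R.card + C.card) ≤ μ + M.card → M ⊆ R ×ˢ C →
      Set.InjOn Prod.fst (M : Set (Fin (n a) × Fin (n b))) →
      Set.InjOn Prod.snd (M : Set (Fin (n a) × Fin (n b))) →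
      (∀ m ∈ M, Known S (pt x a b m.1 m.2) h) →
      (∀ o, Cons o h → ∀ v, IsFaceSink o (insert a (insert b S)) x v → v a ∈ R ∧ v b ∈ C) →
      R.card + C.card ≤ B + M.card →
      Win (Known (insert a (insert b S)) x) (B * k) h := by
  classical
  induction μ with
  | zero =>
    intro B R C M h hμ hM hr hc hk hl hB
    refine .done fun o ho => ?_
    obtain ⟨v, hv, -⟩ := face_unique ho.1 (insert a (insert b S)) x
    obtain ⟨h1, h2⟩ := hl o ho v hv
    have c1 : M.card ≤ R.card :=
      Finset.card_le_card_of_injOn Prod.fst (fun m hm => (Finset.mem_product.1 (hM hm)).1) hr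
    have := Finset.card_pos.2 ⟨_, h1⟩
    omega
  | succ μ loop =>
    intro B R C M h hμ hM hr hc hk hl hB
    by_cases hP : Known (insert a (insert b S)) x h
    · exact .done hP
    obtain ⟨o, ho⟩ : ∃ o, Cons o h := by
      by_contra hno
      exact hP fun o ho => (hno ⟨o, ho⟩).elim
    obtain ⟨v₀, hv₀, -⟩ := face_unique ho.1 (insert a (insert b S)) x
    obtain ⟨hR0, hC0⟩ := hl o ho v₀ hv₀
    have cR : (M.image Prod.fst).card = M.card := Finset.card_image_of_injOn hr
    have cC : (M.image Prod.snd).card = M.card := Finset.card_image_of_injOn hc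
    have sR : M.image Prod.fst ⊆ R := Finset.image_subset_iff.2 fun m hm =>
      (Finset.mem_product.1 (hM hm)).1
    have sC : M.image Prod.snd ⊆ C := Finset.image_subset_iff.2 fun m hm =>
      (Finset.mem_product.1 (hM hm)).2
    have huso := inherited_uso ho.1 hab haS hbS x
    -- All rows are met by `M`: a column dies.
    by_cases hR : R ⊆ M.image Prod.fst
    · have hMne : M.Nonempty := Finset.image_nonempty.1 ⟨_, hR hR0⟩
      obtain ⟨j, hjM, hj⟩ := (huso.exists_dead hMne hr hc).1
      have e1 := Finset.card_erase_add_one hjM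
      have e2 := Finset.card_erase_add_one (Finset.mem_product.1 (hM hjM)).2
      refine loop B R (C.erase j.2) (M.erase j) h (by omega) (fun m hm => ?_)
        (hr.mono (by simp)) (hc.mono (by simp))
        (fun m hm => hk m (Finset.mem_of_mem_erase hm)) (fun o' ho' v hv => ?_) (by omega)
      · obtain ⟨hmj, hm⟩ := Finset.mem_erase.1 hm
        have := Finset.mem_product.1 (hM hm)
        exact Finset.mem_product.2 ⟨this.1, Finset.mem_erase.2
          ⟨fun hh => hmj (hc hm hjM hh), this.2⟩⟩
      · obtain ⟨l1, l2⟩ := hl o' ho' v hv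
        refine ⟨l1, Finset.mem_erase.2 ⟨fun hvj => ?_, l2⟩⟩
        obtain ⟨i, hi, hiv⟩ := Finset.mem_image.1 (hR l1)
        obtain ⟨m, hm, m1, m2⟩ := hj i hi
        rw [hiv] at m1
        rw [← hvj] at m2
        exact hP ((hk m hm).kill hab haS hbS ho ho' hv m1 m2)
    -- All columns are met by `M`: a row dies.
    by_cases hC : C ⊆ M.image Prod.snd
    · have hMne : M.Nonempty := Finset.image_nonempty.1 ⟨_, hC hC0⟩
      obtain ⟨i, hiM, hi⟩ := (huso.exists_dead hMne hr hc).2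
      have e1 := Finset.card_erase_add_one hiM
      have e2 := Finset.card_erase_add_one (Finset.mem_product.1 (hM hiM)).1
      refine loop B (R.erase i.1) C (M.erase i) h (by omega) (fun m hm => ?_)
        (hr.mono (by simp)) (hc.mono (by simp))
        (fun m hm => hk m (Finset.mem_of_mem_erase hm)) (fun o' ho' v hv => ?_) (by omega)
      · obtain ⟨hmi, hm⟩ := Finset.mem_erase.1 hm
        have := Finset.mem_product.1 (hM hm)
        exact Finset.mem_product.2 ⟨Finset.mem_erase.2
          ⟨fun hh => hmi (hr hm hiM hh), this.1⟩, this.2⟩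
      · obtain ⟨l1, l2⟩ := hl o' ho' v hv
        refine ⟨Finset.mem_erase.2 ⟨fun hvi => ?_, l1⟩, l2⟩
        obtain ⟨j, hj, hjv⟩ := Finset.mem_image.1 (hC l2)
        obtain ⟨m, hm, m1, m2⟩ := hi j hj
        rw [hjv] at m2
        rw [← hvi] at m1
        exact hP ((hk m hm).kill hab haS hbS ho ho' hv m1 m2)
    · have lR := Finset.card_lt_card (Finset.ssubset_iff_subset_ne.2
        ⟨sR, fun hh => hR hh.ge⟩)
      obtain ⟨p, hp, hpM⟩ := Finset.not_subset.1 hR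
      obtain ⟨q, hq, hqM⟩ := Finset.not_subset.1 hC
      have cC0 := Finset.card_pos.2 ⟨_, hC0⟩
      obtain ⟨B, rfl⟩ : ∃ B', B = B' + 1 := ⟨B - 1, by omega⟩
      have hpq : (p, q) ∉ M := fun hh => hpM (Finset.mem_image_of_mem Prod.fst hh)
      have e1 := Finset.card_insert_of_notMem hpq
      rw [add_one_mul, add_comm]
      refine (ih (pt x a b p q) h).bind fun h' hs hk' =>
        loop B R C (insert (p, q) M) h' (by omega) ?_ ?_ ?_ ?_
          (fun o' ho' => hl o' (ho'.mono hs)) (by omega)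
      · exact Finset.insert_subset (Finset.mem_product.2 ⟨hp, hq⟩) hM
      · rw [Finset.coe_insert, Set.injOn_insert (by simpa using hpq)]
        exact ⟨hr, by simpa using hpM⟩
      · rw [Finset.coe_insert, Set.injOn_insert (by simpa using hpq)]
        exact ⟨hc, by simpa using hqM⟩
      · intro m hm
        rcases Finset.mem_insert.1 hm with rfl | hm
        · exact hk'
        · exact (hk m hm).mono hs

theorem win_face (N : ℕ) : ∀ S : Finset (Fin d), S.card = N → ∀ x h,
    Win (n := n) (Known S x) ((∑ i ∈ S, n i) ^ ((N + 1) / 2)) h := by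
  classical
  induction N using Nat.twoStepInduction with
  | zero =>
    intro S hS x h
    obtain rfl := Finset.card_eq_zero.1 hS
    have := Win.queryAll (P := Known ∅ x) [x] h fun h' _ hq o _ => by
      obtain ⟨f, hf⟩ := hq x (by simp)
      exact ⟨_, hf, by simp [IsFaceSink]⟩
    simpa using this
  | one =>
    intro S hS x h
    obtain ⟨a, rfl⟩ := Finset.card_eq_one.1 hS
    have := Win.queryAll (P := Known {a} x) (List.ofFn fun p => Function.update x a p) h
      fun h' _ hq o ho => by
        obtain ⟨w, hw, -⟩ := face_unique ho.1 {a} x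
        have hwx : w = Function.update x a (w a) := by
          ext i
          by_cases hi : i = a
          · subst hi; simp
          · simp [hi, hw.1 i (by simpa using hi)]
        obtain ⟨f, hf⟩ := hq w (List.mem_ofFn.2 ⟨w a, hwx.symm⟩)
        exact ⟨_, hf, hw⟩
    simpa using this
  | more N ih _ =>
    intro T hT x h
    obtain ⟨a, T, haT, rfl, hT1⟩ := Finset.card_eq_succ.1 hT
    obtain ⟨b, S, hbS, rfl, hS⟩ := Finset.card_eq_succ.1 hT1
    have hab : a ≠ b := fun hh => haT (by simp [hh])
    have haS : a ∉ S := fun hh => haT (by simp [hh])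
    refine (win_pair hab haS hbS x (ih S hS) _ (n a + n b) Finset.univ Finset.univ ∅ h le_rfl
      (by simp) (by simp) (by simp) (by simp) (by simp) (by simp)).mono ?_
    rw [Finset.sum_insert haT, Finset.sum_insert hbS,
      show (N + 2 + 1) / 2 = (N + 1) / 2 + 1 by omega, pow_succ']
    exact Nat.mul_le_mul (by omega) (Nat.pow_le_pow_left (by omega) _)

end Game

/-- for `d ≥ 1` and `nᵢ ≥ 1` with `N̂ = n₁ + ⋯ + n_d`, there is a
deterministic vertex-query algorithm finding the global sink of every
`d`-dimensional grid USO on `Fin n₁ × ⋯ × Fin n_d` within `N̂ ^ ⌈d / 2⌉` vertex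
queries. -/
theorem exists_vertex_alg_dim (d : ℕ) (hd : 1 ≤ d) (n : Fin d → ℕ)
    (hn : ∀ i, 1 ≤ n i) :
    ∃ A : VertexAlgD d n, ∀ o : GridOrientationD d n, IsUSOD o →
      ∀ s : ∀ i, Fin (n i), IsGlobalSinkD o s →
        ∃ t < (∑ i, n i) ^ ((d + 1) / 2), vertexQueriedD o A t = s := by
  have hface : ∀ (o : GridOrientationD d n) (x v : ∀ i, Fin (n i)),
      IsGlobalSinkD o v ↔ IsFaceSink o Finset.univ x v := fun o x v => by
    simp [IsGlobalSinkD, isSinkInD_iff, IsFaceSink]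
  let x₀ : ∀ i, Fin (n i) := fun i => ⟨0, hn i⟩
  obtain ⟨A, hA⟩ := (win_face d Finset.univ (by simp) x₀ []).toAlg x₀
  refine ⟨A, fun o ho s hs => ?_⟩
  obtain ⟨t, ht, hP⟩ := hA A (fun _ _ => rfl) o 0 rfl
  obtain ⟨e, he, h1⟩ := hP o (cons_hist ho A _)
  obtain ⟨t', ht', hq⟩ := mem_hist he
  refine ⟨t', by omega, hq.trans ?_⟩
  exact (face_unique ho _ x₀).unique h1 ((hface o x₀ s).1 hs)
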